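/- For every half-integer S ≥ 1/2, α_GP(S) < α_GP(S+1), where α_GP(S) = inf_{ρ∈[−1,0)} f_S(ρ). -/

import Mathlib

open Matrix MeasureTheory Filter
open scoped BigOperators RealInnerProductSpace Kronecker

noncomputable section

/-- The spin value `S = n/2` for a half-integer spin encoded by `n : ℕ` (`n ≥ 1` means `S ≥ 1/2`). -/
def spinVal (n : ℕ) : ℝ := (n : ℝ) / 2

/-- The Gauss hypergeometric function `₂F₁(1/2, 1/2; 5/2; x)`, defined by its power series
`Σ_{k≥0} ((1/2)_k (1/2)_k)/((5/2)_k k!) x^k`, where `(a)_k` is the rising factorial. -/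
def hypF (x : ℝ) : ℝ :=
  ∑' k : ℕ,
    ((∏ m ∈ Finset.range k, ((1:ℝ)/2 + m)) * (∏ m ∈ Finset.range k, ((1:ℝ)/2 + m))
      / ((∏ m ∈ Finset.range k, ((5:ℝ)/2 + m)) * (Nat.factorial k))) * x ^ k

/-- `F*(3, ρ) = (8/(3π)) ρ ₂F₁(1/2,1/2;5/2;ρ²)`. -/
def Fstar (ρ : ℝ) : ℝ := (8 / (3 * Real.pi)) * ρ * hypF (ρ ^ 2)

/-- `f_S(ρ) = (1 − F*(3,ρ)) / (1 − ((S+1)/S) ρ)`. -/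
def fS (S ρ : ℝ) : ℝ := (1 - Fstar ρ) / (1 - ((S + 1) / S) * ρ)

/-- `g(ρ) = (1 − F*(3,ρ)) / (1 − ρ)`. -/
def gBOV (ρ : ℝ) : ℝ := (1 - Fstar ρ) / (1 - ρ)

/-- `α_GP(S) = inf_{ρ ∈ [−1, 0)} f_S(ρ)`. -/
def alphaGP (S : ℝ) : ℝ := sInf (fS S '' Set.Ico (-1 : ℝ) 0)

/-- `α_BOV = inf_{ρ ∈ [−1, 0)} g(ρ)`. -/
def alphaBOV : ℝ := sInf (gBOV '' Set.Ico (-1 : ℝ) 0)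

/-
Write `f_S(ρ) = N(ρ) / (1 - c ρ)`, where `N = 1 - F*(3, ·)` and `c = 1 + 1/S` decreases with `S`.
Since all coefficients of `₂F₁(1/2, 1/2; 5/2; ·)` are nonnegative, `N ≥ 1` on `[-1, 0)`. If
`d < c` and `a := α_GP(S)`, then `N(ρ) ≥ max 1 (a (1 - c ρ))`, and the convex combination of these
two affine lower bounds which is proportional to `1 - d ρ` shows
`N(ρ) / (1 - d ρ) ≥ a c / (d + a (c - d))`. This constant exceeds `a` whenever `0 < a < 1`. That
`a < 1` holds because `F*(3, ρ) > ρ` for small negative `ρ`, the slope `8 / (3π)` of `F*(3, ·)` at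
`0` being less than `1`.
-/

section AscPochhammer

lemma ascPochhammer_eval_eq_prod_range {R : Type*} [CommSemiring R] (k : ℕ) (x : R) :
    (ascPochhammer R k).eval x = ∏ m ∈ Finset.range k, (x + m) := by
  induction k with
  | zero => simp
  | succ k ih => rw [ascPochhammer_succ_eval, ih, Finset.prod_range_succ]

variable {R : Type*} [CommSemiring R] [PartialOrder R] [IsOrderedRing R]

lemma ascPochhammer_eval_nonneg (k : ℕ) {x : R} (hx : 0 ≤ x) :
    0 ≤ (ascPochhammer R k).eval x := by
  rw [ascPochhammer_eval_eq_prod_range]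
  exact Finset.prod_nonneg fun m _ => add_nonneg hx m.cast_nonneg

lemma ascPochhammer_eval_le_eval (k : ℕ) {x y : R} (hx : 0 ≤ x) (hxy : x ≤ y) :
    (ascPochhammer R k).eval x ≤ (ascPochhammer R k).eval y := by
  simp only [ascPochhammer_eval_eq_prod_range]
  exact Finset.prod_le_prod (fun m _ => add_nonneg hx m.cast_nonneg) fun m _ => by gcongr

end AscPochhammer

section Hypergeometric

variable {a b c x : ℝ}

lemma ordinaryHypergeometricCoefficient_nonneg (ha : 0 ≤ a) (hb : 0 ≤ b) (hc : 0 ≤ c) (k : ℕ) :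
    0 ≤ ordinaryHypergeometricCoefficient a b c k := by
  have hak := ascPochhammer_eval_nonneg k ha
  have hbk := ascPochhammer_eval_nonneg k hb
  have hck := ascPochhammer_eval_nonneg k hc
  positivity

lemma ordinaryHypergeometricCoefficient_le_one (ha : 0 ≤ a) (hac : a ≤ c) (hb : 0 ≤ b)
    (hb1 : b ≤ 1) (k : ℕ) : ordinaryHypergeometricCoefficient a b c k ≤ 1 := by
  have hack := ascPochhammer_eval_le_eval k ha hac
  have hbk : (ascPochhammer ℝ k).eval b ≤ k.factorial :=
    (ascPochhammer_eval_le_eval k hb hb1).trans_eq (ascPochhammer_eval_one ℝ k)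
  calc ordinaryHypergeometricCoefficient a b c k
      = (ascPochhammer ℝ k).eval a / (ascPochhammer ℝ k).eval c *
          ((ascPochhammer ℝ k).eval b / k.factorial) := by
        rw [ordinaryHypergeometricCoefficient]; ring
    _ ≤ 1 := mul_le_one₀
        (div_le_one_of_le₀ hack (ascPochhammer_eval_nonneg k (ha.trans hac)))
        (div_nonneg (ascPochhammer_eval_nonneg k hb) (Nat.cast_nonneg _))
        (div_le_one_of_le₀ hbk (Nat.cast_nonneg _))

lemma ordinaryHypergeometric_nonneg (ha : 0 ≤ a) (hb : 0 ≤ b) (hc : 0 ≤ c) (hx : 0 ≤ x) :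
    0 ≤ ₂F₁ a b c x := by
  rw [ordinaryHypergeometric_eq_tsum]
  exact tsum_nonneg fun k =>
    mul_nonneg (ordinaryHypergeometricCoefficient_nonneg ha hb hc k) (pow_nonneg hx k)

lemma ordinaryHypergeometric_le_inv_one_sub (ha : 0 ≤ a) (hac : a ≤ c) (hb : 0 ≤ b) (hb1 : b ≤ 1)
    (hx : 0 ≤ x) (hx1 : x < 1) : ₂F₁ a b c x ≤ (1 - x)⁻¹ := by
  have hterm_nonneg (k : ℕ) : 0 ≤ ordinaryHypergeometricCoefficient a b c k • x ^ k :=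
    mul_nonneg (ordinaryHypergeometricCoefficient_nonneg ha hb (ha.trans hac) k) (pow_nonneg hx k)
  have hterm_le (k : ℕ) : ordinaryHypergeometricCoefficient a b c k • x ^ k ≤ x ^ k :=
    mul_le_of_le_one_left (pow_nonneg hx k)
      (ordinaryHypergeometricCoefficient_le_one ha hac hb hb1 k)
  have hgeom := summable_geometric_of_lt_one hx hx1
  rw [ordinaryHypergeometric_eq_tsum, ← tsum_geometric_of_lt_one hx hx1]
  exact (hgeom.of_nonneg_of_le hterm_nonneg hterm_le).tsum_le_tsum hterm_le hgeom

end Hypergeometric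

lemma hypF_eq_ordinaryHypergeometric (x : ℝ) : hypF x = ₂F₁ (1 / 2 : ℝ) (1 / 2 : ℝ) (5 / 2) x := by
  rw [hypF, ordinaryHypergeometric_eq_tsum]
  refine tsum_congr fun k => ?_
  simp only [ascPochhammer_eval_eq_prod_range, smul_eq_mul]
  ring

lemma Fstar_nonpos {ρ : ℝ} (hρ : ρ ≤ 0) : Fstar ρ ≤ 0 := by
  have hF : 0 ≤ hypF (ρ ^ 2) := by
    rw [hypF_eq_ordinaryHypergeometric]
    exact ordinaryHypergeometric_nonneg (by norm_num) (by norm_num) (by norm_num) (sq_nonneg ρ)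
  exact mul_nonpos_of_nonpos_of_nonneg (mul_nonpos_of_nonneg_of_nonpos (by positivity) hρ) hF

lemma lt_Fstar {ρ : ℝ} (hρ : ρ < 0) (hρπ : 8 / (3 * Real.pi) < 1 - ρ ^ 2) : ρ < Fstar ρ := by
  have hgap : 0 < 1 - ρ ^ 2 := lt_trans (by positivity) hρπ
  have hF : hypF (ρ ^ 2) ≤ (1 - ρ ^ 2)⁻¹ := by
    rw [hypF_eq_ordinaryHypergeometric]
    exact ordinaryHypergeometric_le_inv_one_sub (by norm_num) (by norm_num) (by norm_num)
      (by norm_num) (sq_nonneg ρ) (by linarith)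
  have hslope : 8 / (3 * Real.pi) * hypF (ρ ^ 2) < 1 := calc
    8 / (3 * Real.pi) * hypF (ρ ^ 2) ≤ 8 / (3 * Real.pi) * (1 - ρ ^ 2)⁻¹ := by gcongr
    _ < 1 := by rwa [← div_eq_mul_inv, div_lt_one hgap]
  calc ρ < ρ * (8 / (3 * Real.pi) * hypF (ρ ^ 2)) := lt_mul_of_lt_one_right hρ hslope
    _ = Fstar ρ := by rw [Fstar]; ring

section InfimumOfQuotients

variable {a c d : ℝ}

lemma mul_div_le_div_one_sub_mul {N ρ : ℝ} (hN : 1 ≤ N) (hρ : ρ ≤ 0) (ha : 0 ≤ a) (hd : 0 < d)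
    (hdc : d ≤ c) (h : a ≤ N / (1 - c * ρ)) :
    a * c / (d + a * (c - d)) ≤ N / (1 - d * ρ) := by
  have hcρ : 0 < 1 - c * ρ := by nlinarith
  have hdρ : 0 < 1 - d * ρ := by nlinarith
  have hden : 0 < d + a * (c - d) :=
    add_pos_of_pos_of_nonneg hd (mul_nonneg ha (sub_nonneg.2 hdc))
  have haN : a * (1 - c * ρ) ≤ N := (le_div_iff₀ hcρ).1 h
  rw [div_le_div_iff₀ hden hdρ]
  calc a * c * (1 - d * ρ) = d * (a * (1 - c * ρ)) + a * (c - d) * 1 := by ring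
    _ ≤ d * N + a * (c - d) * N := by gcongr
    _ = N * (d + a * (c - d)) := by ring

lemma lt_sInf_image_div_one_sub_mul {N : ℝ → ℝ} {s : Set ℝ} (hs : s.Nonempty)
    (hs0 : ∀ ρ ∈ s, ρ ≤ 0) (hN : ∀ ρ ∈ s, 1 ≤ N ρ) (ha : 0 < a) (ha1 : a < 1) (hd : 0 < d)
    (hdc : d < c) (h : ∀ ρ ∈ s, a ≤ N ρ / (1 - c * ρ)) :
    a < sInf ((fun ρ => N ρ / (1 - d * ρ)) '' s) := by
  have hlt : a < a * c / (d + a * (c - d)) := by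
    have hgain : 0 < (1 - a) * (c - d) := mul_pos (sub_pos.2 ha1) (sub_pos.2 hdc)
    rw [lt_div_iff₀ (add_pos hd (mul_pos ha (sub_pos.2 hdc)))]
    exact mul_lt_mul_of_pos_left (by linarith) ha
  refine hlt.trans_le (le_csInf (hs.image _) (Set.forall_mem_image.2 fun ρ hρ => ?_))
  exact mul_div_le_div_one_sub_mul (hN ρ hρ) (hs0 ρ hρ) ha.le hd hdc.le (h ρ hρ)

end InfimumOfQuotients

section AlphaGP

variable {S : ℝ}

lemma one_lt_add_one_div_self (hS : 0 < S) : 1 < (S + 1) / S :=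
  (one_lt_div hS).2 (lt_add_one S)

lemma inv_one_add_le_fS (hS : 0 < S) {ρ : ℝ} (hρ : ρ ∈ Set.Ico (-1 : ℝ) 0) :
    (1 + (S + 1) / S)⁻¹ ≤ fS S ρ := by
  have hc := one_lt_add_one_div_self hS
  have hF := Fstar_nonpos hρ.2.le
  rw [fS, inv_eq_one_div]
  apply div_le_div₀ <;> nlinarith [hρ.1, hρ.2]

lemma alphaGP_pos (hS : 0 < S) : 0 < alphaGP S := by
  have hbound : (1 + (S + 1) / S)⁻¹ ≤ alphaGP S :=
    le_csInf ((Set.nonempty_Ico.2 (by norm_num)).image _)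
      (Set.forall_mem_image.2 fun _ => inv_one_add_le_fS hS)
  exact lt_of_lt_of_le (by positivity) hbound

lemma alphaGP_le_fS (hS : 0 < S) {ρ : ℝ} (hρ : ρ ∈ Set.Ico (-1 : ℝ) 0) : alphaGP S ≤ fS S ρ :=
  csInf_le ⟨_, Set.forall_mem_image.2 fun _ => inv_one_add_le_fS hS⟩ (Set.mem_image_of_mem _ hρ)

lemma alphaGP_lt_one (hS : 0 < S) : alphaGP S < 1 := by
  have hslope : 8 / (3 * Real.pi) < 1 - (-1 / 4 : ℝ) ^ 2 := by
    rw [div_lt_iff₀ (by positivity)]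
    linarith [Real.pi_gt_three]
  have hF : -1 / 4 < Fstar (-1 / 4) := lt_Fstar (by norm_num) hslope
  have hc := one_lt_add_one_div_self hS
  have hfS : fS S (-1 / 4) < 1 := by
    rw [fS, div_lt_one (by linarith)]
    linarith
  exact (alphaGP_le_fS hS (by norm_num)).trans_lt hfS

theorem alphaGP_strictMono_general : StrictMonoOn alphaGP (Set.Ioi 0) := by
  intro S (hS : 0 < S) T (hT : 0 < T) hST
  have hcoeff : (T + 1) / T < (S + 1) / S := by
    rw [div_lt_div_iff₀ hT hS]
    linarith
  exact lt_sInf_image_div_one_sub_mul (Set.nonempty_Ico.2 (by norm_num)) (fun ρ hρ => hρ.2.le)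
    (fun ρ hρ => by linarith [Fstar_nonpos hρ.2.le]) (alphaGP_pos hS) (alphaGP_lt_one hS)
    (by positivity) hcoeff fun ρ hρ => alphaGP_le_fS hS hρ

end AlphaGP

/-- For every half-integer `S ≥ 1/2`, `α_GP(S) < α_GP(S+1)`. -/
theorem alphaGP_strictMono (n : ℕ) (hn : 1 ≤ n) :
    alphaGP (spinVal n) < alphaGP (spinVal n + 1) := by
  have hS : 0 < spinVal n := div_pos (Nat.cast_pos.2 hn) two_pos
  exact alphaGP_strictMono_general hS (hS.trans (lt_add_one _)) (lt_add_one _)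

end
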